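/- arXiv:1604.04765 — 3 statements merged into one kernel-verified Lean document; each statement's English description precedes it below -/
import Mathlib

section
/- Let U be a squared four-dimensional Bessel process started at 0. For every ε ∈ (0,1) there exists a constant c₁ = c₁(ε) > 0 such that for all a ≥ 1, P{ sup_{s ∈ [0,a]} U(s) < a^{1−ε} } ≤ exp(−c₁ a^{ε}). -/
open MeasureTheory ProbabilityTheory Real Set Filter

noncomputable section

variable {Ω : Type*} [MeasurableSpace Ω]

/-- A standard one-dimensional Brownian motion (indexed by `ℝ`, with the relevant
properties required for nonnegative times): starts at `0`, has continuous paths,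
independent increments, and Gaussian increments of variance `t - s`. -/
structure IsStdBM (P : Measure Ω) (B : ℝ → Ω → ℝ) : Prop where
  measurable : ∀ t : ℝ, Measurable (B t)
  start : ∀ ω, B 0 ω = 0
  cont : ∀ ω, Continuous fun t => B t ω
  indep : ∀ (n : ℕ) (t : Fin (n + 1) → ℝ), (∀ i, 0 ≤ t i) → Monotone t →
    iIndepFun
      (fun (i : Fin n) ω => B (t i.succ) ω - B (t i.castSucc) ω) P
  gauss : ∀ s t : ℝ, 0 ≤ s → s ≤ t →
    P.map (fun ω => B t ω - B s ω) = gaussianReal 0 (Real.toNNReal (t - s))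

/-- A standard `d`-dimensional Brownian motion started at `0`: the coordinate
processes are independent standard one-dimensional Brownian motions. -/
structure IsStdBMVec (d : ℕ) (P : Measure Ω) (B : ℝ → Ω → EuclideanSpace ℝ (Fin d)) : Prop where
  coord : ∀ i : Fin d, IsStdBM P (fun t ω => B t ω i)
  indepCoord : iIndepFun
    (fun (i : Fin d) ω => fun t : ℝ => B t ω i) P

/-- Last zero of `W` in `[0,1]`. -/
def lastZero (W : ℝ → Ω → ℝ) (ω : Ω) : ℝ := sSup {t ∈ Icc (0:ℝ) 1 | W t ω = 0}

/-- `m` is a standard Brownian meander: obtained from a Brownian motion `W` by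
`m s = |W (g + s (1 - g))| / √(1 - g)`, where `g` is the last zero of `W` before time `1`. -/
def IsBrownianMeander (P : Measure Ω) (m : ℝ → Ω → ℝ) : Prop :=
  ∃ W : ℝ → Ω → ℝ, IsStdBM P W ∧
    ∀ ω, ∀ s ∈ Icc (0:ℝ) 1,
      m s ω = |W (lastZero W ω + s * (1 - lastZero W ω)) ω| / Real.sqrt (1 - lastZero W ω)

/-- Running maximum `X̄(t) = sup_{s ∈ [0,t]} X(s)`. -/
def runMax (X : ℝ → Ω → ℝ) (t : ℝ) (ω : Ω) : ℝ := ⨆ s : Icc (0:ℝ) t, X s ω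

/-- Maximal drawdown on `[0,T]` : `sup_{s ∈ [0,T]} (X̄(s) - X(s))`. -/
def maxDDOn (X : ℝ → Ω → ℝ) (T : ℝ) (ω : Ω) : ℝ := ⨆ s : Icc (0:ℝ) T, (runMax X s ω - X s ω)

/-- Drawdown time `τ_λ^X := inf {t ≥ 0 : X̄(t) - X(t) ≥ λ}`. -/
def ddTime (lam : ℝ) (X : ℝ → Ω → ℝ) (ω : Ω) : ℝ :=
  sInf {t | 0 ≤ t ∧ lam ≤ runMax X t ω - X t ω}

/-- Three-dimensional Bessel process built from a 3-dimensional Brownian motion. -/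
def bessel3 (β : ℝ → Ω → EuclideanSpace ℝ (Fin 3)) (t : ℝ) (ω : Ω) : ℝ := ‖β t ω‖

/-- Squared four-dimensional Bessel process built from a 4-dimensional Brownian motion. -/
def sqBessel4 (γ : ℝ → Ω → EuclideanSpace ℝ (Fin 4)) (t : ℝ) (ω : Ω) : ℝ := ‖γ t ω‖ ^ 2

end

open scoped ENNReal

/-!
If a Brownian motion stays in `(-r, r)` up to time `n r²`, then its `n` successive increments over
intervals of length `r²` all have modulus less than `2r`. These increments are independent
`N(0, r²)` variables, so this has probability at most `qⁿ`, where `q < 1` is the mass that the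
standard Gaussian gives to `(-2, 2)`. The squared norm of a `d`-dimensional Brownian motion
dominates the square of each coordinate, so it stays below `x = r²` up to time `a` with probability
at most `q ^ ⌊a / x⌋`, and `x = a ^ (1 - ε)` makes `a / x` equal to `a ^ ε`.
-/

lemma measure_lt_one_of_nonempty_interior_compl {X : Type*} [TopologicalSpace X]
    [MeasurableSpace X] (μ : Measure X) [IsProbabilityMeasure μ] [μ.IsOpenPosMeasure] {s : Set X}
    (hs : MeasurableSet s) (hsc : (interior sᶜ).Nonempty) : μ s < 1 := by
  have hpos := Measure.measure_pos_of_nonempty_interior μ hsc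
  rwa [prob_compl_eq_one_sub hs, tsub_pos_iff_lt] at hpos

lemma measure_forall_mem_eq_pow {Ω ι E : Type*} [MeasurableSpace Ω] [MeasurableSpace E] [Fintype ι]
    {P : Measure Ω} {ν : Measure E} {X : ι → Ω → E} (hind : iIndepFun X P)
    (hlaw : ∀ i, HasLaw (X i) ν P) {A : Set E} (hA : MeasurableSet A) :
    P {ω | ∀ i, X i ω ∈ A} = ν A ^ Fintype.card ι := by
  have hmarginal (i : ι) : P (X i ⁻¹' A) = ν A := by
    rw [← (hlaw i).map_eq, Measure.map_apply_of_aemeasurable (hlaw i).aemeasurable hA]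
  calc P {ω | ∀ i, X i ω ∈ A}
      = P (⋂ i ∈ Finset.univ, X i ⁻¹' A) := by
        congr 1
        ext ω
        simp only [mem_ofPred_eq, Finset.mem_univ, iInter_true, mem_iInter, mem_preimage]
    _ = ∏ i, P (X i ⁻¹' A) := hind.measure_inter_preimage_eq_mul Finset.univ fun _ _ => hA
    _ = ν A ^ Fintype.card ι := by simp only [hmarginal, Finset.prod_const, Finset.card_univ]

lemma isOpenPosMeasure_gaussianReal (μ : ℝ) {v : NNReal} (hv : v ≠ 0) :
    (gaussianReal μ v).IsOpenPosMeasure :=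
  (gaussianReal_absolutelyContinuous' μ hv).isOpenPosMeasure

lemma gaussianReal_ball_lt_one (μ : ℝ) {v : NNReal} (hv : v ≠ 0) (x r : ℝ) :
    gaussianReal μ v (Metric.ball x r) < 1 := by
  have := isOpenPosMeasure_gaussianReal μ hv
  have hsub : Ioi (x + r) ⊆ (Metric.ball x r)ᶜ := fun y hy hball => by
    rw [Metric.mem_ball, Real.dist_eq, abs_lt] at hball
    linarith [mem_Ioi.1 hy]
  exact measure_lt_one_of_nonempty_interior_compl _ measurableSet_ball
    (nonempty_Ioi.mono (interior_maximal hsub isOpen_Ioi))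

lemma gaussianReal_ball_const_mul (μ : ℝ) (v : NNReal) {c : ℝ} (hc : c ≠ 0) (x r : ℝ) :
    gaussianReal (c * μ) ((c ^ 2).toNNReal * v) (Metric.ball (c * x) (|c| * r)) =
      gaussianReal μ v (Metric.ball x r) := by
  rw [Real.toNNReal_of_nonneg (sq_nonneg c), ← gaussianReal_map_const_mul,
    Measure.map_apply (measurable_const_mul c) measurableSet_ball]
  congr 1
  ext y
  simp only [mem_preimage, Metric.mem_ball, Real.dist_eq, ← mul_sub, abs_mul]
  exact mul_lt_mul_iff_right₀ (abs_pos.2 hc)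

/-- The exponential decay rate, per increment, of the probability that Brownian increments of
variance `r²` all stay in `(-2r, 2r)`. By scaling it does not depend on `r`, and is minus the
logarithm of the mass that the standard Gaussian gives to `(-2, 2)`. -/
noncomputable def smallBallRate : ℝ := -Real.log ((gaussianReal 0 1).real (Metric.ball 0 2))

lemma gaussianReal_real_ball_two_pos : 0 < (gaussianReal 0 1).real (Metric.ball 0 2) := by
  have := isOpenPosMeasure_gaussianReal 0 one_ne_zero
  exact ENNReal.toReal_pos (Metric.measure_ball_pos _ _ two_pos).ne' (measure_ne_top _ _)

lemma smallBallRate_pos : 0 < smallBallRate := by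
  refine neg_pos.2 (Real.log_neg gaussianReal_real_ball_two_pos ?_)
  exact ENNReal.toReal_lt_of_lt_ofReal
    (by simpa only [ENNReal.ofReal_one] using gaussianReal_ball_lt_one 0 one_ne_zero 0 2)

lemma gaussianReal_ball_two_mul_eq_exp {r : ℝ} (hr : 0 < r) :
    gaussianReal 0 (r ^ 2).toNNReal (Metric.ball 0 (2 * r)) =
      ENNReal.ofReal (Real.exp (-smallBallRate)) := by
  rw [smallBallRate, neg_neg, Real.exp_log gaussianReal_real_ball_two_pos, ofReal_measureReal]
  simpa only [mul_zero, mul_one, abs_of_pos hr, mul_comm 2 r] using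
    gaussianReal_ball_const_mul 0 1 hr.ne' 0 2

lemma le_runMax {Ω : Type*} {X : ℝ → Ω → ℝ} {ω : Ω} {s t : ℝ}
    (hX : ContinuousOn (fun u => X u ω) (Icc 0 t)) (hs : s ∈ Icc 0 t) : X s ω ≤ runMax X t ω := by
  have hbdd := isCompact_Icc.bddAbove_image hX
  rw [image_eq_range] at hbdd
  exact le_ciSup hbdd ⟨s, hs⟩

section BrownianMotion

variable {Ω : Type*} [MeasurableSpace Ω] {P : Measure Ω}

namespace IsStdBM

variable {B : ℝ → Ω → ℝ}

lemma hasLaw_increment (hB : IsStdBM P B) {s t : ℝ} (hs : 0 ≤ s) (hst : s ≤ t) :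
    HasLaw (fun ω => B t ω - B s ω) (gaussianReal 0 (t - s).toNNReal) P :=
  ⟨((hB.measurable t).sub (hB.measurable s)).aemeasurable, hB.gauss s t hs hst⟩

lemma measure_forall_increment_mem (hB : IsStdBM P B) {h : ℝ} (hh : 0 ≤ h) {A : Set ℝ}
    (hA : MeasurableSet A) (n : ℕ) :
    P {ω | ∀ i : Fin n, B ((i + 1 : ℕ) * h) ω - B ((i : ℕ) * h) ω ∈ A} =
      gaussianReal 0 h.toNNReal A ^ n := by
  let t : Fin (n + 1) → ℝ := fun i => (i : ℕ) * h
  have ht_nonneg : ∀ i, 0 ≤ t i := fun i => by positivity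
  have ht_mono : Monotone t := fun i j hij =>
    mul_le_mul_of_nonneg_right (Nat.cast_le.2 hij) hh
  have hlaw (i : Fin n) : HasLaw (fun ω => B (t i.succ) ω - B (t i.castSucc) ω)
      (gaussianReal 0 h.toNNReal) P := by
    have hlength : t i.succ - t i.castSucc = h := by
      simp only [t, Fin.val_succ, Fin.val_castSucc]
      push_cast
      ring
    simpa only [hlength] using
      hB.hasLaw_increment (ht_nonneg i.castSucc) (ht_mono i.castSucc_le_succ)
  have hprod := measure_forall_mem_eq_pow (hB.indep n t ht_nonneg ht_mono) hlaw hA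
  simpa only [t, Fin.val_succ, Fin.val_castSucc, Fintype.card_fin] using hprod

lemma measure_forall_abs_lt_le_pow (hB : IsStdBM P B) {h : ℝ} (hh : 0 ≤ h) (r : ℝ) (n : ℕ) :
    P {ω | ∀ s ∈ Icc 0 (n * h), |B s ω| < r} ≤
      gaussianReal 0 h.toNNReal (Metric.ball 0 (2 * r)) ^ n := by
  rw [← hB.measure_forall_increment_mem hh measurableSet_ball n]
  refine measure_mono fun ω hω i => ?_
  have hgrid {k : ℕ} (hk : k ≤ n) : |B (k * h) ω| < r :=
    hω _ ⟨by positivity, mul_le_mul_of_nonneg_right (Nat.cast_le.2 hk) hh⟩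
  rw [mem_ball_zero_iff, Real.norm_eq_abs, two_mul]
  exact (abs_sub _ _).trans_lt (add_lt_add (hgrid i.2) (hgrid i.2.le))

lemma measure_forall_abs_lt_le_exp (hB : IsStdBM P B) {r T : ℝ} (hr : 0 < r) (hrT : r ^ 2 ≤ T) :
    P {ω | ∀ s ∈ Icc 0 T, |B s ω| < r} ≤
      ENNReal.ofReal (Real.exp (-(smallBallRate / 2) * (T / r ^ 2))) := by
  have hr2 : 0 < r ^ 2 := by positivity
  set n : ℕ := ⌊T / r ^ 2⌋₊
  have hn_le : n * r ^ 2 ≤ T :=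
    (le_div_iff₀ hr2).1 (Nat.floor_le (div_nonneg (hr2.le.trans hrT) hr2.le))
  have hn_gt : T / r ^ 2 / 2 < n := Nat.div_two_lt_floor ((one_le_div₀ hr2).2 hrT)
  calc P {ω | ∀ s ∈ Icc 0 T, |B s ω| < r}
      ≤ P {ω | ∀ s ∈ Icc 0 (n * r ^ 2), |B s ω| < r} :=
        measure_mono fun ω hω s hs => hω s (Icc_subset_Icc_right hn_le hs)
    _ ≤ gaussianReal 0 (r ^ 2).toNNReal (Metric.ball 0 (2 * r)) ^ n :=
        hB.measure_forall_abs_lt_le_pow hr2.le r n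
    _ = ENNReal.ofReal (Real.exp (n * -smallBallRate)) := by
        rw [gaussianReal_ball_two_mul_eq_exp hr, ← ENNReal.ofReal_pow (Real.exp_nonneg _),
          Real.exp_nat_mul]
    _ ≤ ENNReal.ofReal (Real.exp (-(smallBallRate / 2) * (T / r ^ 2))) := by
        refine ENNReal.ofReal_le_ofReal (Real.exp_le_exp.2 ?_)
        linarith [mul_le_mul_of_nonneg_left hn_gt.le smallBallRate_pos.le]

end IsStdBM

namespace IsStdBMVec

variable {d : ℕ} {γ : ℝ → Ω → EuclideanSpace ℝ (Fin d)}

lemma continuous (hγ : IsStdBMVec d P γ) (ω : Ω) : Continuous fun t => γ t ω :=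
  (PiLp.continuous_toLp 2 _).comp (continuous_pi fun i => (hγ.coord i).cont ω)

lemma abs_apply_lt_sqrt_of_runMax_lt (hγ : IsStdBMVec d P γ) (i : Fin d) {x T : ℝ} {ω : Ω}
    (hω : runMax (fun t ω => ‖γ t ω‖ ^ 2) T ω < x) {s : ℝ} (hs : s ∈ Icc 0 T) :
    |γ s ω i| < √x := by
  have hnorm : ‖γ s ω‖ ^ 2 < x :=
    (le_runMax (X := fun t ω => ‖γ t ω‖ ^ 2) ((hγ.continuous ω).norm.pow 2).continuousOn
      hs).trans_lt hω
  exact (PiLp.norm_apply_le (γ s ω) i).trans_lt (Real.lt_sqrt_of_sq_lt hnorm)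

lemma measure_runMax_norm_sq_lt_le_exp [NeZero d] (hγ : IsStdBMVec d P γ) {x T : ℝ} (hx : 0 < x)
    (hxT : x ≤ T) :
    P {ω | runMax (fun t ω => ‖γ t ω‖ ^ 2) T ω < x} ≤
      ENNReal.ofReal (Real.exp (-(smallBallRate / 2) * (T / x))) := by
  have hsq : √x ^ 2 = x := Real.sq_sqrt hx.le
  calc P {ω | runMax (fun t ω => ‖γ t ω‖ ^ 2) T ω < x}
      ≤ P {ω | ∀ s ∈ Icc 0 T, |γ s ω 0| < √x} :=
        measure_mono fun _ hω _ hs => hγ.abs_apply_lt_sqrt_of_runMax_lt 0 hω hs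
    _ ≤ ENNReal.ofReal (Real.exp (-(smallBallRate / 2) * (T / √x ^ 2))) :=
        (hγ.coord 0).measure_forall_abs_lt_le_exp (Real.sqrt_pos.2 hx) (hsq.trans_le hxT)
    _ = ENNReal.ofReal (Real.exp (-(smallBallRate / 2) * (T / x))) := by rw [hsq]

end IsStdBMVec

theorem sqBessel4_small_ball_general {d : ℕ} [NeZero d] {γ : ℝ → Ω → EuclideanSpace ℝ (Fin d)}
    (hγ : IsStdBMVec d P γ) {ε : ℝ} (hε : 0 ≤ ε) {a : ℝ} (ha : 1 ≤ a) :
    P {ω | runMax (fun t ω => ‖γ t ω‖ ^ 2) a ω < a ^ (1 - ε)} ≤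
      ENNReal.ofReal (Real.exp (-(smallBallRate / 2) * a ^ ε)) := by
  have ha0 : 0 < a := one_pos.trans_le ha
  have hle : a ^ (1 - ε) ≤ a := Real.rpow_le_self_of_one_le ha (sub_le_self 1 hε)
  have hdiv : a / a ^ (1 - ε) = a ^ ε := by
    rw [Real.rpow_sub ha0, Real.rpow_one, div_div_cancel₀ ha0.ne']
  simpa only [hdiv] using hγ.measure_runMax_norm_sq_lt_le_exp (Real.rpow_pos_of_pos ha0 _) hle

end BrownianMotion

/-- for every `ε ∈ (0,1)` there is `c₁ > 0` such that for all `a ≥ 1`,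
`P{sup_{s ∈ [0,a]} U(s) < a^{1-ε}} ≤ exp(-c₁ a^ε)` for the squared four-dimensional
Bessel process `U` started at `0`. -/
theorem sqBessel4_small_ball
    {Ω : Type*} [MeasurableSpace Ω] (P : Measure Ω) [IsProbabilityMeasure P]
    (γ : ℝ → Ω → EuclideanSpace ℝ (Fin 4)) (hγ : IsStdBMVec 4 P γ)
    (ε : ℝ) (hε : ε ∈ Ioo (0:ℝ) 1) :
    ∃ c₁ : ℝ, 0 < c₁ ∧ ∀ a : ℝ, 1 ≤ a →
      P {ω | runMax (sqBessel4 γ) a ω < a ^ (1 - ε)}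
        ≤ ENNReal.ofReal (Real.exp (-c₁ * a ^ ε)) :=
  ⟨smallBallRate / 2, half_pos smallBallRate_pos, fun _ ha =>
    sqBessel4_small_ball_general hγ hε.1.le ha⟩
end

section
/- Let U be a squared four-dimensional Bessel process started at 0 and τ₁^U := inf{ t ≥ 0 : Ū(t) − U(t) ≥ 1 } with Ū(t) := sup_{s ∈ [0,t]} U(s). For every ε ∈ (0,1) there exists a constant c₃ > 0 such that for all a ≥ 2, P{ sup_{s ∈ [0,a]} U(s) ≥ a^{1−ε} and τ₁^U > a } ≤ exp(−c₃ a^{1−ε}). -/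
open MeasureTheory ProbabilityTheory Real Set Filter

open scoped ENNReal

/-!
Sample the Brownian motion `B` at the even integers. Whatever the position at time `2 * k`, with a
probability bounded below each coordinate first moves by at least `lam + 2` away from `0` and then,
in the next unit of time, comes back by an amount between `lam + 2` and `lam + 3`. This decreases
every squared coordinate, and hence `‖B‖ ^ 2`, by at least `lam`. By the Markov property, the
probability that no such drop has occurred by time `2 * n` decays geometrically in `n`.
-/

open scoped NNReal

section IndependentIncrements

variable {Ω : Type*} {mΩ : MeasurableSpace Ω} {P : Measure Ω}

lemma iIndepFun_curry {ι κ E : Type*} [MeasurableSpace E] {X : ι → κ → Ω → E}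
    (hX : ∀ i j, Measurable (X i j)) (h : iIndepFun (fun (p : ι × κ) ↦ X p.1 p.2) P) :
    iIndepFun (fun i ω j ↦ X i j ω) P := by
  have := h.isProbabilityMeasure
  have hprob (i : ι) (j : κ) : IsProbabilityMeasure (P.map (X i j)) :=
    Measure.isProbabilityMeasure_map (hX i j).aemeasurable
  have hrow (i : ι) : P.map (fun ω j ↦ X i j ω) = Measure.infinitePi fun j ↦ P.map (X i j) :=
    (h.precomp (Prod.mk_right_injective i)).map_fun_eq_infinitePi_map (hX i)
  have hcurry : (fun ω i j ↦ X i j ω) = MeasurableEquiv.curry ι κ E ∘ fun ω p ↦ X p.1 p.2 ω := rfl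
  rw [iIndepFun_iff_map_fun_eq_infinitePi_map (by fun_prop), hcurry,
    ← Measure.map_map (by fun_prop) (by fun_prop), h.map_fun_eq_infinitePi_map (by fun_prop),
    Measure.infinitePi_map_curry fun i j ↦ P.map (X i j)]
  simp_rw [hrow]

lemma hasIndepIncrements_pi {ι T E : Type*} [Preorder T] [MeasurableSpace E] [Sub E]
    [MeasurableSub₂ E] {X : ι → T → Ω → E} (hX : ∀ i t, Measurable (X i t))
    (hindep : iIndepFun (fun i ω t ↦ X i t ω) P) (hincr : ∀ i, HasIndepIncrements (X i) P) :
    HasIndepIncrements (fun t ω i ↦ X i t ω) P := by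
  refine hasIndepIncrements_iff_nat.2 fun t ht ↦ ?_
  have hrows : iIndepFun (fun i ω n ↦ X i (t (n + 1)) ω - X i (t n) ω) P :=
    hindep.comp (fun _ (f : T → E) n ↦ f (t (n + 1)) - f (t n)) fun _ ↦ by fun_prop
  have hjoint := iIndepFun_uncurry' (X := fun i n ω ↦ X i (t (n + 1)) ω - X i (t n) ω)
    (by fun_prop) hrows fun i ↦ (hincr i).nat ht
  exact iIndepFun_curry (X := fun n i ω ↦ X i (t (n + 1)) ω - X i (t n) ω) (by fun_prop)
    (hjoint.precomp Prod.swap_injective)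

lemma indep_natural_iSup_comap_increment {E : Type*} [AddCommGroup E] [TopologicalSpace E]
    [TopologicalSpace.MetrizableSpace E] [MeasurableSpace E] [BorelSpace E] [MeasurableAdd₂ E]
    [MeasurableSub₂ E] {X : ℕ → Ω → E} (hX : ∀ n, StronglyMeasurable (X n)) {x₀ : E}
    (h0 : ∀ ω, X 0 ω = x₀) (hincr : HasIndepIncrements X P) (n : ℕ) :
    Indep (Filtration.natural X hX n)
      (⨆ j ∈ Ici n, MeasurableSpace.comap (fun ω ↦ X (j + 1) ω - X j ω) inferInstance) P := by
  have hm (j : ℕ) : Measurable fun ω ↦ X (j + 1) ω - X j ω :=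
    (hX (j + 1)).measurable.sub (hX j).measurable
  have hdisj : Disjoint (Iio n) (Ici n) := Set.disjoint_left.2 fun _ hj ↦ (mem_Iio.1 hj).not_ge
  refine indep_of_indep_of_le_left
    (indep_iSup_of_disjoint (fun j ↦ (hm j).comap_le) (hincr.nat monotone_id) hdisj) ?_
  refine iSup₂_le fun j hj ↦ Measurable.comap_le ?_
  induction j with
  | zero => simp only [funext h0, measurable_const]
  | succ j ih =>
    have hstep : Measurable[⨆ j ∈ Iio n, MeasurableSpace.comap (fun ω ↦ X (j + 1) ω - X j ω)
        inferInstance] fun ω ↦ X (j + 1) ω - X j ω :=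
      (comap_measurable _).mono (le_iSup₂_of_le j hj le_rfl) le_rfl
    simpa only [sub_add_cancel] using hstep.fun_add (ih (Nat.le_of_succ_le hj))

end IndependentIncrements

section UniformHitting

variable {Ω E F : Type*} {m mΩ : MeasurableSpace Ω} {P : Measure Ω}
  [MeasurableSpace E] [MeasurableSpace F] {D : Set (E × F)} {p : ℝ≥0∞}

lemma mul_measure_le_measure_inter_of_indep [IsFiniteMeasure P] (hm : m ≤ mΩ) {X : Ω → E}
    {Y : Ω → F} (hX : Measurable[m] X) (hY : Measurable Y)
    (hXY : Indep m (MeasurableSpace.comap Y inferInstance) P) (hD : MeasurableSet D)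
    (hp : ∀ x, p ≤ P {ω | (x, Y ω) ∈ D}) {A : Set Ω} (hA : MeasurableSet[m] A) :
    p * P A ≤ P (A ∩ {ω | (X ω, Y ω) ∈ D}) := by
  have hX' : Measurable X := hX.mono hm le_rfl
  have hlaw : (P.restrict A).map (fun ω ↦ (X ω, Y ω)) = ((P.restrict A).map X).prod (P.map Y) := by
    refine (Measure.prod_eq fun s t hs ht ↦ ?_).symm
    rw [Measure.map_apply (hX'.prodMk hY) (hs.prod ht), Measure.map_apply hX' hs,
      Measure.map_apply hY ht, Measure.restrict_apply (hX'.prodMk hY (hs.prod ht)),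
      Measure.restrict_apply (hX' hs), mk_preimage_prod, inter_right_comm]
    exact (Indep_iff _ _ _).1 hXY _ _ ((hX hs).inter hA) ⟨t, ht, rfl⟩
  calc p * P A = ∫⁻ _, p ∂(P.restrict A).map X := by
        rw [lintegral_const, Measure.map_apply hX' .univ, preimage_univ,
          Measure.restrict_apply_univ]
    _ ≤ ∫⁻ x, P.map Y (Prod.mk x ⁻¹' D) ∂(P.restrict A).map X := by
        refine lintegral_mono fun x ↦ (hp x).trans_eq ?_
        rw [Measure.map_apply hY (measurable_prodMk_left hD)]
        rfl
    _ = P (A ∩ {ω | (X ω, Y ω) ∈ D}) := by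
        rw [← Measure.prod_apply hD, ← hlaw, Measure.map_apply (hX'.prodMk hY) hD,
          Measure.restrict_apply (hX'.prodMk hY hD), inter_comm]
        rfl

lemma measure_forall_lt_notMem_le_one_sub_pow [IsProbabilityMeasure P] {ℱ : Filtration ℕ mΩ}
    {X : ℕ → Ω → E} {Y : ℕ → Ω → F} (hX : ∀ k, Measurable[ℱ k] (X k))
    (hY : ∀ k, Measurable[ℱ (k + 1)] (Y k))
    (hXY : ∀ k, Indep (ℱ k) (MeasurableSpace.comap (Y k) inferInstance) P) (hD : MeasurableSet D)
    (hp : ∀ k x, p ≤ P {ω | (x, Y k ω) ∈ D}) (n : ℕ) :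
    P {ω | ∀ k < n, (X k ω, Y k ω) ∉ D} ≤ (1 - p) ^ n := by
  set A : ℕ → Set Ω := fun n ↦ {ω | ∀ k < n, (X k ω, Y k ω) ∉ D}
  have hDmeas (k : ℕ) : MeasurableSet[ℱ (k + 1)] {ω | (X k ω, Y k ω) ∈ D} :=
    (((hX k).mono (ℱ.mono k.le_succ) le_rfl).prodMk (hY k)) hD
  have hsucc (n : ℕ) : A (n + 1) = A n \ {ω | (X n ω, Y n ω) ∈ D} := by
    ext ω
    exact Nat.forall_lt_succ_right
  have hA (n : ℕ) : MeasurableSet[ℱ n] (A n) := by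
    induction n with
    | zero => simp [A]
    | succ n ih => exact hsucc n ▸ (ℱ.mono n.le_succ _ ih).diff (hDmeas n)
  induction n with
  | zero => simp
  | succ n ih =>
    have hhit : p * P (A n) ≤ P (A n ∩ {ω | (X n ω, Y n ω) ∈ D}) :=
      mul_measure_le_measure_inter_of_indep (ℱ.le n) (hX n) ((hY n).mono (ℱ.le _) le_rfl) (hXY n)
        hD (hp n) (hA n)
    calc P (A (n + 1)) = P (A n) - P (A n ∩ {ω | (X n ω, Y n ω) ∈ D}) :=
          hsucc n ▸ ENNReal.eq_sub_of_add_eq (measure_ne_top _ _)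
            (measure_sdiff_add_inter _ (ℱ.le _ _ (hDmeas n)))
      _ ≤ P (A n) - p * P (A n) := tsub_le_tsub_left hhit _
      _ = (1 - p) * P (A n) := by
          rw [ENNReal.sub_mul fun _ _ ↦ measure_ne_top P _, one_mul]
      _ ≤ (1 - p) ^ (n + 1) := by
          rw [pow_succ']
          gcongr

lemma one_sub_pow_le_ofReal_exp (hp : p ≠ ∞) (n : ℕ) :
    (1 - p) ^ n ≤ ENNReal.ofReal (exp (-p.toReal * n)) := by
  have hbase : 1 - p ≤ ENNReal.ofReal (exp (-p.toReal)) := by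
    rw [← ENNReal.ofReal_toReal hp, ← ENNReal.ofReal_one,
      ← ENNReal.ofReal_sub 1 ENNReal.toReal_nonneg, ENNReal.ofReal_toReal hp]
    exact ENNReal.ofReal_le_ofReal (one_sub_le_exp_neg _)
  calc (1 - p) ^ n ≤ ENNReal.ofReal (exp (-p.toReal)) ^ n := by gcongr
    _ = ENNReal.ofReal (exp (-p.toReal * n)) := by
        rw [← ENNReal.ofReal_pow (exp_nonneg _), ← exp_nat_mul, mul_comm]

lemma measure_forall_lt_notMem_le_one_sub_pow_of_hasIndepIncrements {G : Type*} [AddCommGroup G]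
    [TopologicalSpace G] [TopologicalSpace.MetrizableSpace G] [MeasurableSpace G] [BorelSpace G]
    [MeasurableAdd₂ G] [MeasurableSub₂ G] [IsProbabilityMeasure P] {X : ℕ → Ω → G}
    (hX : ∀ n, StronglyMeasurable (X n)) {x₀ : G} (h0 : ∀ ω, X 0 ω = x₀)
    (hincr : HasIndepIncrements X P) {D : Set (G × G × G)} (hD : MeasurableSet D)
    (hp : ∀ k x, p ≤ P {ω | (x, X (k + 1) ω - X k ω, X (k + 2) ω - X (k + 1) ω) ∈ D}) (n : ℕ) :
    P {ω | ∀ k < n, (X (2 * k) ω, X (2 * k + 1) ω - X (2 * k) ω,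
      X (2 * k + 2) ω - X (2 * k + 1) ω) ∉ D} ≤ (1 - p) ^ n := by
  let 𝒢 := Filtration.natural X hX
  let ℱ : Filtration ℕ mΩ :=
    ⟨fun k ↦ 𝒢 (2 * k), fun i j hij ↦ 𝒢.mono (Nat.mul_le_mul_left 2 hij), fun k ↦ 𝒢.le _⟩
  have hmeas {m n : ℕ} (hmn : m ≤ n) : Measurable[𝒢 n] (X m) :=
    ((Filtration.stronglyAdapted_natural hX m).mono (𝒢.mono hmn)).measurable
  refine measure_forall_lt_notMem_le_one_sub_pow (ℱ := ℱ) (X := fun k ↦ X (2 * k))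
    (Y := fun k ω ↦ (X (2 * k + 1) ω - X (2 * k) ω, X (2 * k + 2) ω - X (2 * k + 1) ω))
    (fun k ↦ hmeas le_rfl) (fun k ↦ ?_) (fun k ↦ ?_) hD (fun k ↦ hp (2 * k)) n
  · exact ((hmeas (by lia)).sub (hmeas (by lia))).prodMk ((hmeas (by lia)).sub (hmeas (by lia)))
  · have hincrement {j : ℕ} (hj : 2 * k ≤ j) : Measurable[⨆ j ∈ Ici (2 * k),
        MeasurableSpace.comap (fun ω ↦ X (j + 1) ω - X j ω) inferInstance]
        fun ω ↦ X (j + 1) ω - X j ω :=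
      (comap_measurable _).mono (le_iSup₂_of_le j hj le_rfl) le_rfl
    exact indep_of_indep_of_le_right (indep_natural_iSup_comap_increment hX h0 hincr (2 * k))
      ((hincrement le_rfl).prodMk (hincrement (Nat.le_succ _))).comap_le

end UniformHitting

lemma gaussianReal_zero_mul_preimage (v : ℝ≥0) {σ : ℝ} (hσ : σ ^ 2 = 1) {s : Set ℝ}
    (hs : MeasurableSet s) : gaussianReal 0 v ((σ * ·) ⁻¹' s) = gaussianReal 0 v s := by
  have hvar : NNReal.mk (σ ^ 2) (sq_nonneg σ) = 1 := NNReal.eq hσ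
  rw [← Measure.map_apply (by fun_prop) hs, gaussianReal_map_const_mul, mul_zero, hvar, one_mul]

lemma gaussianReal_Icc_pos (μ : ℝ) {v : ℝ≥0} (hv : v ≠ 0) {a b : ℝ} (hab : a < b) :
    0 < gaussianReal μ v (Icc a b) := by
  refine pos_iff_ne_zero.2 fun h ↦ ?_
  have hvol := gaussianReal_absolutelyContinuous' μ hv h
  simp [hab.not_ge] at hvol

section Drop

variable {lam : ℝ}

lemma le_sq_sub_sq_of_mem_Icc (hlam : 0 ≤ lam) {σ x z w : ℝ} (hσ : σ ^ 2 = 1) (hx : 0 ≤ σ * x)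
    (hz : σ * z ∈ Icc (lam + 2) (lam + 3)) (hw : -σ * w ∈ Icc (lam + 2) (lam + 3)) :
    lam ≤ (x + z) ^ 2 - (x + z + w) ^ 2 := by
  obtain ⟨hz₁, -⟩ := hz
  obtain ⟨hw₁, hw₂⟩ := hw
  have hfactor : (x + z) ^ 2 - (x + z + w) ^ 2 = -σ * w * (2 * (σ * x + σ * z) - -σ * w) := by
    linear_combination (2 * (x + z) * w + w ^ 2) * hσ
  calc lam ≤ (lam + 2) * (lam + 1) := by nlinarith
    _ ≤ -σ * w * (2 * (σ * x + σ * z) - -σ * w) :=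
        mul_le_mul hw₁ (by linarith) (by linarith) (by linarith)
    _ = (x + z) ^ 2 - (x + z + w) ^ 2 := hfactor.symm

lemma le_norm_sq_sub_norm_sq_of_forall {ι : Type*} [Fintype ι] [Nonempty ι] (hlam : 0 ≤ lam)
    {x y : EuclideanSpace ℝ ι} (h : ∀ i, lam ≤ x i ^ 2 - y i ^ 2) : lam ≤ ‖x‖ ^ 2 - ‖y‖ ^ 2 := by
  rw [EuclideanSpace.real_norm_sq_eq, EuclideanSpace.real_norm_sq_eq, ← Finset.sum_sub_distrib]
  let i₀ := Classical.arbitrary ι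
  exact (h i₀).trans
    (Finset.single_le_sum (fun i _ ↦ hlam.trans (h i)) (Finset.mem_univ i₀))

lemma ddTime_le_of_le_sub {Ω : Type*} {X : ℝ → Ω → ℝ} {ω : Ω} {s t : ℝ} (hs : 0 ≤ s) (hst : s ≤ t)
    (hX : ContinuousOn (fun u ↦ X u ω) (Icc 0 t)) (h : lam ≤ X s ω - X t ω) :
    ddTime lam X ω ≤ t := by
  have hbdd : BddAbove (range fun u : Icc 0 t ↦ X u ω) := by
    simpa only [image_eq_range] using isCompact_Icc.bddAbove_image hX
  have hmax : X s ω ≤ runMax X t ω := le_ciSup hbdd ⟨s, hs, hst⟩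
  exact csInf_le ⟨0, fun u hu ↦ hu.1⟩ ⟨hs.trans hst, by linarith⟩

end Drop

section BrownianMotion

variable {Ω : Type*} {mΩ : MeasurableSpace Ω} {P : Measure Ω}

lemma IsStdBM.hasIndepIncrements {B : ℝ → Ω → ℝ} (hB : IsStdBM P B) :
    HasIndepIncrements (fun t : ℝ≥0 ↦ B t) P := fun n t ht ↦
  hB.indep n (fun i ↦ t i) (fun i ↦ (t i).2) (NNReal.coe_mono.comp ht)

variable {d : ℕ} {B : ℝ → Ω → EuclideanSpace ℝ (Fin d)}

lemma IsStdBMVec.measurable (hB : IsStdBMVec d P B) (t : ℝ) : Measurable (B t) :=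
  (WithLp.measurable_toLp 2 _).comp (measurable_pi_lambda _ fun i ↦ (hB.coord i).measurable t)

lemma IsStdBMVec.continuous_s10 (hB : IsStdBMVec d P B) (ω : Ω) : Continuous fun t ↦ B t ω :=
  (PiLp.continuous_toLp 2 _).comp (continuous_pi fun i ↦ (hB.coord i).cont ω)

lemma IsStdBMVec.apply_zero (hB : IsStdBMVec d P B) (ω : Ω) : B 0 ω = 0 := by
  ext i
  exact (hB.coord i).start ω

lemma IsStdBMVec.hasIndepIncrements (hB : IsStdBMVec d P B) :
    HasIndepIncrements (fun t : ℝ≥0 ↦ B t) P := by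
  have hpi : HasIndepIncrements (fun (t : ℝ≥0) ω i ↦ B t ω i) P :=
    hasIndepIncrements_pi (fun i t ↦ (hB.coord i).measurable t)
      (hB.indepCoord.comp (fun _ (f : ℝ → ℝ) (t : ℝ≥0) ↦ f t) fun _ ↦ by fun_prop)
      fun i ↦ (hB.coord i).hasIndepIncrements
  exact hpi.map' (f := (WithLp.linearEquiv 2 ℝ (Fin d → ℝ)).symm) (WithLp.measurable_toLp 2 _)

lemma IsStdBMVec.measure_forall_increment_mem (hB : IsStdBMVec d P B) {s t : ℝ} (hs : 0 ≤ s)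
    (hst : s ≤ t) {J : Fin d → Set ℝ} (hJ : ∀ i, MeasurableSet (J i)) :
    P {ω | ∀ i, (B t ω - B s ω) i ∈ J i} = ∏ i, gaussianReal 0 (t - s).toNNReal (J i) := by
  have hm (i : Fin d) : Measurable fun ω ↦ (B t ω - B s ω) i :=
    ((hB.coord i).measurable t).sub ((hB.coord i).measurable s)
  have hindep : iIndepFun (fun i ω ↦ (B t ω - B s ω) i) P :=
    hB.indepCoord.comp (fun _ (f : ℝ → ℝ) ↦ f t - f s) fun _ ↦ by fun_prop
  calc P {ω | ∀ i, (B t ω - B s ω) i ∈ J i}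
      = P (⋂ i, (fun ω ↦ (B t ω - B s ω) i) ⁻¹' J i) := by
        congr 1
        ext ω
        simp
    _ = ∏ i, P ((fun ω ↦ (B t ω - B s ω) i) ⁻¹' J i) :=
        hindep.meas_iInter fun i ↦ ⟨J i, hJ i, rfl⟩
    _ = ∏ i, gaussianReal 0 (t - s).toNNReal (J i) := by
        refine Finset.prod_congr rfl fun i _ ↦ ?_
        rw [← (hB.coord i).gauss s t hs hst]
        exact (Measure.map_apply (hm i) (hJ i)).symm

lemma IsStdBMVec.measure_forall_mul_increment_mem (hB : IsStdBMVec d P B) (s : ℝ≥0)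
    {σ : Fin d → ℝ} (hσ : ∀ i, σ i ^ 2 = 1) {J : Set ℝ} (hJ : MeasurableSet J) :
    P {ω | ∀ i, σ i * (B (s + 1) ω - B s ω) i ∈ J} = gaussianReal 0 1 J ^ d := by
  have h := hB.measure_forall_increment_mem s.2 (le_add_of_nonneg_right zero_le_one)
    fun i ↦ measurable_const_mul (σ i) hJ
  simpa [gaussianReal_zero_mul_preimage 1 (hσ _) hJ] using h

variable [NeZero d] {lam : ℝ}

lemma IsStdBMVec.le_measure_le_norm_sq_sub_norm_sq (hB : IsStdBMVec d P B) (hlam : 0 ≤ lam)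
    (s : ℝ≥0) (x : EuclideanSpace ℝ (Fin d)) :
    gaussianReal 0 1 (Icc (lam + 2) (lam + 3)) ^ (2 * d) ≤
      P {ω | lam ≤ ‖x + (B (s + 1) ω - B s ω)‖ ^ 2
        - ‖x + (B (s + 1) ω - B s ω) + (B (s + 1 + 1) ω - B (s + 1) ω)‖ ^ 2} := by
  have hsign (y : ℝ) : ∃ σ : ℝ, σ ^ 2 = 1 ∧ 0 ≤ σ * y := by
    rcases le_total 0 y with hy | hy
    exacts [⟨1, by simpa using hy⟩, ⟨-1, by simpa using hy⟩]
  choose σ hσ hσx using fun i ↦ hsign (x i)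
  set J := Icc (lam + 2) (lam + 3)
  set out : Set (EuclideanSpace ℝ (Fin d)) := {z | ∀ i, σ i * z i ∈ J}
  set back : Set (EuclideanSpace ℝ (Fin d)) := {w | ∀ i, -σ i * w i ∈ J}
  have hJ : MeasurableSet J := measurableSet_Icc
  have hindep : IndepFun (fun ω ↦ B (s + 1) ω - B s ω) (fun ω ↦ B (s + 1 + 1) ω - B (s + 1) ω) P :=
    hB.hasIndepIncrements.indepFun_sub_sub (r := s) (s := s + 1) (t := s + 1 + 1)
      (by simp) (by simp)
  calc gaussianReal 0 1 J ^ (2 * d)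
      = P ((fun ω ↦ B (s + 1) ω - B s ω) ⁻¹' out)
          * P ((fun ω ↦ B (s + 1 + 1) ω - B (s + 1) ω) ⁻¹' back) := by
        rw [two_mul, pow_add]
        congr 1
        · exact (hB.measure_forall_mul_increment_mem s hσ hJ).symm
        · exact (hB.measure_forall_mul_increment_mem (s + 1) (σ := fun i ↦ -σ i)
            (by simpa using hσ) hJ).symm
    _ = P ((fun ω ↦ B (s + 1) ω - B s ω) ⁻¹' out
          ∩ (fun ω ↦ B (s + 1 + 1) ω - B (s + 1) ω) ⁻¹' back) :=
        (hindep.measure_inter_preimage_eq_mul _ _ (by measurability) (by measurability)).symm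
    _ ≤ _ := measure_mono fun ω ⟨hz, hw⟩ ↦ le_norm_sq_sub_norm_sq_of_forall hlam fun i ↦
        le_sq_sub_sq_of_mem_Icc hlam (hσ i) (hσx i) (hz i) (hw i)

lemma IsStdBMVec.measure_two_mul_lt_ddTime_norm_sq_le [IsProbabilityMeasure P]
    (hB : IsStdBMVec d P B) (hlam : 0 ≤ lam) (n : ℕ) :
    P {ω | 2 * n < ddTime lam (fun t ω ↦ ‖B t ω‖ ^ 2) ω} ≤
      (1 - gaussianReal 0 1 (Icc (lam + 2) (lam + 3)) ^ (2 * d)) ^ n := by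
  let D : Set (EuclideanSpace ℝ (Fin d) × EuclideanSpace ℝ (Fin d) × EuclideanSpace ℝ (Fin d)) :=
    {q | lam ≤ ‖q.1 + q.2.1‖ ^ 2 - ‖q.1 + q.2.1 + q.2.2‖ ^ 2}
  have hD : MeasurableSet D := measurableSet_le (by fun_prop) (by fun_prop)
  have hincr : HasIndepIncrements (fun (k : ℕ) ω ↦ B k ω) P := fun m t ht ↦
    hB.hasIndepIncrements m (fun i ↦ t i) (Nat.mono_cast.comp ht)
  have hnodrop : {ω | 2 * n < ddTime lam (fun t ω ↦ ‖B t ω‖ ^ 2) ω} ⊆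
      {ω | ∀ k < n, (B (2 * k : ℕ) ω, B (2 * k + 1 : ℕ) ω - B (2 * k : ℕ) ω,
        B (2 * k + 2 : ℕ) ω - B (2 * k + 1 : ℕ) ω) ∉ D} := by
    intro ω hω k hk hdrop
    have hdrop' : lam ≤ ‖B (2 * k + 1 : ℕ) ω‖ ^ 2 - ‖B (2 * k + 2 : ℕ) ω‖ ^ 2 := by
      simpa only [D, mem_ofPred_eq, add_sub_cancel] using hdrop
    have hdd : ddTime lam (fun t ω ↦ ‖B t ω‖ ^ 2) ω ≤ (2 * k + 2 : ℕ) :=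
      ddTime_le_of_le_sub (by positivity) (by norm_cast; lia)
        ((hB.continuous_s10 ω).norm.pow 2).continuousOn hdrop'
    have hk' : ((2 * k + 2 : ℕ) : ℝ) ≤ 2 * n := by norm_cast; lia
    exact (mem_ofPred.1 hω).not_ge (hdd.trans hk')
  refine (measure_mono hnodrop).trans
    (measure_forall_lt_notMem_le_one_sub_pow_of_hasIndepIncrements
      (fun k ↦ (hB.measurable k).stronglyMeasurable) (by simpa using hB.apply_zero) hincr hD
      (fun k x ↦ ?_) n)
  have hdrop := hB.le_measure_le_norm_sq_sub_norm_sq hlam k x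
  rw [add_assoc _ (1 : ℝ), one_add_one_eq_two] at hdrop
  exact_mod_cast hdrop

end BrownianMotion

theorem sqBessel4_large_sup_long_drawdown_tail_general {Ω : Type*} [MeasurableSpace Ω]
    (P : Measure Ω) [IsProbabilityMeasure P] {d : ℕ} [NeZero d]
    {B : ℝ → Ω → EuclideanSpace ℝ (Fin d)} (hB : IsStdBMVec d P B) {lam : ℝ} (hlam : 0 ≤ lam) :
    ∃ c : ℝ, 0 < c ∧ ∀ a : ℝ, 2 ≤ a →
      P {ω | a < ddTime lam (fun t ω ↦ ‖B t ω‖ ^ 2) ω} ≤ ENNReal.ofReal (exp (-c * a)) := by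
  set p := gaussianReal 0 1 (Icc (lam + 2) (lam + 3)) ^ (2 * d)
  have hp : p ≠ ∞ := ENNReal.pow_ne_top (measure_ne_top _ _)
  have hp_pos : 0 < p.toReal := ENNReal.toReal_pos
    (pow_ne_zero _ (gaussianReal_Icc_pos 0 one_ne_zero (by linarith)).ne') hp
  refine ⟨p.toReal / 4, by positivity, fun a ha ↦ ?_⟩
  set n := ⌊a / 2⌋₊
  have hn_le : 2 * n ≤ a := by linarith [Nat.floor_le (show 0 ≤ a / 2 by linarith)]
  have hle_n : a / 4 ≤ n := by
    have hn_pos : (1 : ℝ) ≤ n := by exact_mod_cast Nat.le_floor (by push_cast; linarith)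
    linarith [Nat.lt_floor_add_one (a / 2)]
  calc P {ω | a < ddTime lam (fun t ω ↦ ‖B t ω‖ ^ 2) ω}
      ≤ P {ω | 2 * n < ddTime lam (fun t ω ↦ ‖B t ω‖ ^ 2) ω} :=
        measure_mono fun _ ↦ hn_le.trans_lt
    _ ≤ (1 - p) ^ n := hB.measure_two_mul_lt_ddTime_norm_sq_le hlam n
    _ ≤ ENNReal.ofReal (exp (-p.toReal * n)) := one_sub_pow_le_ofReal_exp hp n
    _ ≤ ENNReal.ofReal (exp (-(p.toReal / 4) * a)) :=
        ENNReal.ofReal_le_ofReal (exp_le_exp.2 (by nlinarith))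

/-- for every `ε ∈ (0,1)` there is `c₃ > 0` such that for all `a ≥ 2`,
`P{sup_{s ∈ [0,a]} U(s) ≥ a^{1-ε}, τ₁ > a} ≤ exp(-c₃ a^{1-ε})` for the squared
four-dimensional Bessel process `U` started at `0` with unit drawdown time `τ₁`. -/
theorem sqBessel4_large_sup_long_drawdown_tail
    {Ω : Type*} [MeasurableSpace Ω] (P : Measure Ω) [IsProbabilityMeasure P]
    (γ : ℝ → Ω → EuclideanSpace ℝ (Fin 4)) (hγ : IsStdBMVec 4 P γ)
    (ε : ℝ) (hε : ε ∈ Ioo (0:ℝ) 1) :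
    ∃ c₃ : ℝ, 0 < c₃ ∧ ∀ a : ℝ, 2 ≤ a →
      P {ω | a ^ (1 - ε) ≤ runMax (sqBessel4 γ) a ω ∧ a < ddTime 1 (sqBessel4 γ) ω}
        ≤ ENNReal.ofReal (Real.exp (-c₃ * a ^ (1 - ε))) := by
  obtain ⟨c, hc, htail⟩ := sqBessel4_large_sup_long_drawdown_tail_general P hγ zero_le_one
  refine ⟨c, hc, fun a ha ↦ ((measure_mono fun _ ↦ And.right).trans (htail a ha)).trans ?_⟩
  have hpow : a ^ (1 - ε) ≤ a := rpow_le_self_of_one_le (by linarith) (by linarith [hε.1])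
  exact ENNReal.ofReal_le_ofReal (exp_le_exp.2 (mul_le_mul_of_nonpos_left hpow (by linarith)))
end

section
/- Let U be a squared four-dimensional Bessel process started at 0 and A(t) := ∫₀^t U(s) ds. There exists a constant c₅ > 0 such that for all a > 0 and all b ≥ a², P{ A(a) ≥ b } ≤ exp(−c₅ b / a²). -/
open MeasureTheory ProbabilityTheory Real Set Filter

open scoped ENNReal

/-!
In dimension `d` the coordinates of the Brownian motion are independent, so `A(a)` is a sum of `d`
independent copies of `∫₀ᵃ B_s² ds`. Jensen's inequality for the uniform measure on `[0, a]` bounds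
the moment generating function of each copy by that of `a B_a²`, which yields a tail
`exp (K - b / 4a²)`. This is useless for `b` close to `a²`. There one uses that `B_s - (s / a) B_a`
is independent of `B_a`: conditionally on `B_a` being small, `∫₀ᵃ B_s² ds` has mean close to
`a² / 6`, so that by Markov's inequality and independence `A(a) < κ a²` has probability bounded
away from `0`, uniformly in `a`, as soon as `κ > d / 6`. A weighted geometric mean of the two bounds
removes the constant `K`.
-/

open scoped NNReal

section Averages

variable {α Ω E : Type*} [MeasurableSpace α] [MeasurableSpace Ω] [NormedAddCommGroup E]
  {ν : Measure α} {P : Measure Ω}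

lemma integrable_uncurry_of_forall_integral_norm_le [IsFiniteMeasure ν] [SFinite P]
    {f : α → Ω → E} (hf : AEStronglyMeasurable (Function.uncurry f) (ν.prod P))
    (hint : ∀ᵐ s ∂ν, Integrable (f s) P) {C : ℝ} (hC : ∀ᵐ s ∂ν, ∫ ω, ‖f s ω‖ ∂P ≤ C) :
    Integrable (Function.uncurry f) (ν.prod P) := by
  refine (integrable_prod_iff hf).2 ⟨hint, .of_bound hf.norm.integral_prod_right' C ?_⟩
  filter_upwards [hC] with s hs
  rwa [norm_of_nonneg (integral_nonneg fun ω => norm_nonneg _)]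

variable [IsProbabilityMeasure ν] [SFinite P] {X : α → Ω → ℝ} {t C : ℝ}

lemma exp_mul_integral_le {f : α → ℝ} (hf : Integrable f ν)
    (hexp : Integrable (fun s => exp (t * f s)) ν) :
    exp (t * ∫ s, f s ∂ν) ≤ ∫ s, exp (t * f s) ∂ν := by
  rw [← integral_const_mul]
  exact convexOn_exp.map_integral_le continuous_exp.continuousOn isClosed_univ
    (.of_forall fun _ => mem_univ _) (hf.const_mul t) hexp

lemma integrable_exp_mul_and_mgf_le_of_forall_mgf_le (hX : Measurable (Function.uncurry X))
    (hXint : ∀ᵐ ω ∂P, Integrable (fun s => X s ω) ν)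
    (hexp : ∀ᵐ s ∂ν, Integrable (fun ω => exp (t * X s ω)) P)
    (hC : ∀ᵐ s ∂ν, mgf (X s) P t ≤ C) :
    Integrable (fun ω => exp (t * ∫ s, X s ω ∂ν)) P ∧
      mgf (fun ω => ∫ s, X s ω ∂ν) P t ≤ C := by
  have hprod : Integrable (Function.uncurry fun s ω => exp (t * X s ω)) (ν.prod P) :=
    integrable_uncurry_of_forall_integral_norm_le
      (hX.const_mul t).exp.aestronglyMeasurable hexp (C := C) <| by
        simpa only [norm_of_nonneg (exp_pos _).le, mgf] using hC
  have jensen : ∀ᵐ ω ∂P, exp (t * ∫ s, X s ω ∂ν) ≤ ∫ s, exp (t * X s ω) ∂ν := by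
    filter_upwards [hXint, hprod.prod_left_ae] with ω hω hexpω using exp_mul_integral_le hω hexpω
  have hint : Integrable (fun ω => exp (t * ∫ s, X s ω ∂ν)) P :=
    have hmeas := hX.stronglyMeasurable.integral_prod_left'.measurable
    hprod.integral_prod_right.mono' (hmeas.const_mul t).exp.aestronglyMeasurable <| by
      simpa only [norm_of_nonneg (exp_pos _).le, Function.uncurry_apply_pair] using jensen
  refine ⟨hint, ?_⟩
  calc mgf (fun ω => ∫ s, X s ω ∂ν) P t
      ≤ ∫ ω, ∫ s, exp (t * X s ω) ∂ν ∂P := integral_mono_ae hint hprod.integral_prod_right jensen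
    _ = ∫ s, mgf (X s) P t ∂ν := (integral_integral_swap hprod).symm
    _ ≤ ∫ _, C ∂ν := integral_mono_ae hprod.integral_prod_left (integrable_const C) hC
    _ = C := by simp

end Averages

section Gaussian

variable {v : ℝ≥0} {t : ℝ}

lemma gaussianPDFReal_mul_exp_mul_sq (hv : v ≠ 0) (x : ℝ) :
    gaussianPDFReal 0 v x * exp (t * x ^ 2) =
      (√(2 * π * v))⁻¹ * exp (-((1 - 2 * v * t) / (2 * v)) * x ^ 2) := by
  rw [gaussianPDFReal, mul_assoc, ← exp_add]
  congr 2
  field_simp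
  ring

lemma integrable_exp_mul_sq_gaussianReal (ht : 2 * v * t < 1) :
    Integrable (fun x => exp (t * x ^ 2)) (gaussianReal 0 v) := by
  rcases eq_or_ne v 0 with rfl | hv
  · simp [integrable_dirac]
  rw [gaussianReal_of_var_ne_zero 0 hv, integrable_withDensity_iff_integrable_smul'
    (measurable_gaussianPDF 0 v) (.of_forall fun _ => gaussianPDF_lt_top)]
  simp only [toReal_gaussianPDF, smul_eq_mul, gaussianPDFReal_mul_exp_mul_sq hv]
  exact (integrable_exp_neg_mul_sq (div_pos (sub_pos.2 ht) (by positivity))).const_mul _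

lemma mgf_sq_gaussianReal (ht : 2 * v * t < 1) :
    mgf (fun x => x ^ 2) (gaussianReal 0 v) t = (√(1 - 2 * v * t))⁻¹ := by
  rcases eq_or_ne v 0 with rfl | hv
  · simp [mgf]
  rw [mgf, integral_gaussianReal_eq_integral_smul hv]
  simp only [smul_eq_mul, gaussianPDFReal_mul_exp_mul_sq hv]
  have hpos : 0 < 1 - 2 * v * t := sub_pos.2 ht
  have hdiv : π / ((1 - 2 * v * t) / (2 * v)) = 2 * π * v / (1 - 2 * v * t) := by field_simp
  rw [integral_const_mul, integral_gaussian, hdiv, sqrt_div (by positivity)]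
  field_simp

lemma gaussianReal_sq_le_pos {δ : ℝ} (hδ : 0 < δ) (m : ℝ) (hv : v ≠ 0) :
    0 < (gaussianReal m v).real {x | x ^ 2 ≤ δ} := by
  have hnhds : {x : ℝ | x ^ 2 ≤ δ} ∈ nhds 0 :=
    (continuous_pow 2).continuousAt.preimage_mem_nhds (Iic_mem_nhds (by simpa using hδ))
  have hnull : gaussianReal m v {x | x ^ 2 ≤ δ} ≠ 0 := fun h =>
    (Measure.measure_pos_of_mem_nhds volume hnhds).ne'
      (gaussianReal_absolutelyContinuous' m hv h)
  exact ENNReal.toReal_pos hnull (measure_ne_top _ _)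

end Gaussian

lemma setIntegral_sq_add_const_mul_of_indepFun {Ω : Type*} [MeasurableSpace Ω] {P : Measure Ω}
    [IsFiniteMeasure P] {X Z : Ω → ℝ} (hXZ : IndepFun X Z P) (hX : MemLp X 2 P) (hZ : MemLp Z 2 P)
    (hZm : Measurable Z) (hX0 : ∫ ω, X ω ∂P = 0) {S : Set ℝ} (hS : MeasurableSet S) (c : ℝ) :
    ∫ ω in Z ⁻¹' S, (X ω + c * Z ω) ^ 2 ∂P =
      P.real (Z ⁻¹' S) * ∫ ω, X ω ^ 2 ∂P + c ^ 2 * ∫ ω in Z ⁻¹' S, Z ω ^ 2 ∂P := by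
  have hsq : ∫ ω in Z ⁻¹' S, X ω ^ 2 ∂P = P.real (Z ⁻¹' S) * ∫ ω, X ω ^ 2 ∂P :=
    Indep.setIntegral_eq_mul (f := (· ^ 2)) hZm.comap_le hXZ.symm hX.aemeasurable ⟨S, hS, rfl⟩
      (by fun_prop)
  have hcross : ∫ ω in Z ⁻¹' S, X ω * Z ω ∂P = 0 := by
    rw [← integral_indicator (hZm hS)]
    calc ∫ ω, (Z ⁻¹' S).indicator (fun ω => X ω * Z ω) ω ∂P
        = ∫ ω, X ω * S.indicator id (Z ω) ∂P := by
          congr with ω; by_cases h : Z ω ∈ S <;> simp [h]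
      _ = (∫ ω, X ω ∂P) * ∫ ω, S.indicator id (Z ω) ∂P :=
          hXZ.integral_fun_comp_mul_comp (f := id) hX.aemeasurable hZm.aemeasurable
            aestronglyMeasurable_id (measurable_id.indicator hS).aestronglyMeasurable
      _ = 0 := by rw [hX0, zero_mul]
  calc ∫ ω in Z ⁻¹' S, (X ω + c * Z ω) ^ 2 ∂P
      = ∫ ω in Z ⁻¹' S, (X ω ^ 2 + 2 * c * (X ω * Z ω) + c ^ 2 * Z ω ^ 2) ∂P := by
        congr with ω; ring
    _ = (∫ ω in Z ⁻¹' S, X ω ^ 2 ∂P) + 2 * c * ∫ ω in Z ⁻¹' S, X ω * Z ω ∂P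
          + c ^ 2 * ∫ ω in Z ⁻¹' S, Z ω ^ 2 ∂P := by
        have hXX := hX.integrable_sq.restrict (s := Z ⁻¹' S)
        have hXZ : Integrable (fun ω => 2 * c * (X ω * Z ω)) (P.restrict (Z ⁻¹' S)) :=
          ((hX.integrable_mul hZ).const_mul (2 * c)).restrict
        have hZZ := (hZ.integrable_sq.const_mul (c ^ 2)).restrict (s := Z ⁻¹' S)
        rw [← integral_const_mul, ← integral_const_mul, ← integral_add hXX hXZ,
          ← integral_add (hXX.fun_add hXZ) hZZ]
    _ = _ := by rw [hsq, hcross, mul_zero, add_zero]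

lemma mul_measureReal_le_mul_measureReal_lt_add_setIntegral {Ω : Type*} [MeasurableSpace Ω]
    {P : Measure Ω} [IsFiniteMeasure P] {E : Set Ω} {f : Ω → ℝ} {ε : ℝ} (hε : 0 ≤ ε)
    (hf : 0 ≤ᵐ[P.restrict E] f) (hint : IntegrableOn f E P) :
    ε * P.real E ≤ ε * P.real {ω | f ω < ε} + ∫ ω in E, f ω ∂P := by
  have hcover : {ω | f ω < ε} ∪ {ω | ε ≤ f ω} = univ := by
    ext ω
    simpa using lt_or_ge (f ω) ε
  calc ε * P.real E
      ≤ ε * ((P.restrict E).real {ω | f ω < ε} + (P.restrict E).real {ω | ε ≤ f ω}) := by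
        rw [← measureReal_restrict_apply_univ, ← hcover]
        gcongr
        exact measureReal_union_le _ _
    _ ≤ ε * P.real {ω | f ω < ε} + ∫ ω in E, f ω ∂P := by
        rw [mul_add]
        refine add_le_add (mul_le_mul_of_nonneg_left ?_ hε)
          (mul_meas_ge_le_integral_of_nonneg hf hint ε)
        exact ENNReal.toReal_mono (measure_ne_top _ _) (Measure.restrict_apply_le _ _)

section IndependentSums

variable {ι Ω : Type*} [Fintype ι] [MeasurableSpace Ω] {P : Measure Ω} {X : ι → Ω → ℝ}

lemma measureReal_le_sum_le_exp_mul_pow (hind : iIndepFun X P)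
    (hX : ∀ i, Measurable (X i)) {t M : ℝ} (ht : 0 ≤ t)
    (hint : ∀ i, Integrable (fun ω => exp (t * X i ω)) P) (hM : ∀ i, mgf (X i) P t ≤ M) (b : ℝ) :
    P.real {ω | b ≤ ∑ i, X i ω} ≤ exp (-t * b) * M ^ Fintype.card ι := by
  have := hind.isProbabilityMeasure
  calc P.real {ω | b ≤ ∑ i, X i ω} = P.real {ω | b ≤ (∑ i, X i) ω} := by
        simp only [Finset.sum_apply]
    _ ≤ exp (-t * b) * mgf (∑ i, X i) P t :=
        measure_ge_le_exp_mul_mgf b ht (hind.integrable_exp_mul_sum hX fun i _ => hint i)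
    _ = exp (-t * b) * ∏ i, mgf (X i) P t := by rw [hind.mgf_sum hX]
    _ ≤ exp (-t * b) * M ^ Fintype.card ι := by
        rw [← Finset.card_univ, ← Finset.prod_const]
        gcongr with i
        · exact fun i _ => mgf_nonneg
        · exact hM i

lemma measureReal_le_sum_le_one_sub_pow (hind : iIndepFun X P) (hX : ∀ i, Measurable (X i))
    {u v p : ℝ} (hp : 0 ≤ p) (hpX : ∀ i, p ≤ P.real {ω | X i ω < u})
    (huv : Fintype.card ι * u < v) :
    P.real {ω | v ≤ ∑ i, X i ω} ≤ 1 - p ^ Fintype.card ι := by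
  have := hind.isProbabilityMeasure
  have hprod : P.real (⋂ i, X i ⁻¹' Iio u) = ∏ i, P.real (X i ⁻¹' Iio u) := by
    have h := hind.measure_inter_preimage_eq_mul Finset.univ (sets := fun _ => Iio u)
      fun _ _ => measurableSet_Iio
    simp only [Finset.mem_univ, iInter_true] at h
    simp only [measureReal_def, h, ENNReal.toReal_prod]
  have hdisj : {ω | v ≤ ∑ i, X i ω} ⊆ (⋂ i, X i ⁻¹' Iio u)ᶜ := by
    intro ω (hω : v ≤ _) hsmall
    have : ∑ i, X i ω ≤ Fintype.card ι * u :=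
      (Finset.sum_le_card_nsmul _ _ u fun i _ => (mem_iInter.1 hsmall i).le).trans_eq (by simp)
    linarith
  calc P.real {ω | v ≤ ∑ i, X i ω} ≤ P.real (⋂ i, X i ⁻¹' Iio u)ᶜ := measureReal_mono hdisj
    _ = 1 - P.real (⋂ i, X i ⁻¹' Iio u) :=
        probReal_compl_eq_one_sub (.iInter fun i => hX i measurableSet_Iio)
    _ ≤ 1 - p ^ Fintype.card ι := by
        rw [hprod, ← Finset.card_univ, ← Finset.prod_const]
        gcongr with i
        exact hpX i

end IndependentSums

lemma le_exp_of_le_exp_of_le_one_sub {x p K θ r : ℝ} (hp : 0 < p) (hK : 0 ≤ K)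
    (htail : x ≤ exp (K - θ * r)) (hgap : x ≤ 1 - p) :
    x ≤ exp (-(θ * p / (K + p)) * r) := by
  have hcombo : min (K - θ * r) (-p) ≤ -(θ * p / (K + p)) * r := by
    have h := Convex.min_le_combo (K - θ * r) (-p) (a := p / (K + p)) (b := K / (K + p))
      (by positivity) (by positivity) (by field_simp; ring)
    refine h.trans_eq ?_
    rw [smul_eq_mul, smul_eq_mul]
    field_simp
    ring
  calc x ≤ min (exp (K - θ * r)) (exp (-p)) := le_min htail (hgap.trans (one_sub_le_exp_neg p))
    _ = exp (min (K - θ * r) (-p)) := exp_monotone.map_min.symm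
    _ ≤ exp (-(θ * p / (K + p)) * r) := exp_le_exp.2 hcombo

/-- The random variable `∫₀ᵃ X_s² ds`. -/
noncomputable def sqIntegral {Ω : Type*} (X : ℝ → Ω → ℝ) (a : ℝ) (ω : Ω) : ℝ :=
  ∫ s in (0 : ℝ)..a, X s ω ^ 2

/-- The value at time `s ∈ [0, a]` of the bridge of `X` from `0` to `0` over `[0, a]`. -/
noncomputable def bridge {Ω : Type*} (X : ℝ → Ω → ℝ) (a s : ℝ) (ω : Ω) : ℝ :=
  X s ω - s / a * X a ω

lemma measurable_sqIntegral {Ω : Type*} [MeasurableSpace Ω] {X : ℝ → Ω → ℝ}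
    (hmeas : ∀ t, Measurable (X t)) (hcont : ∀ ω, Continuous fun t => X t ω) (a : ℝ) :
    Measurable (sqIntegral X a) := by
  have h : StronglyMeasurable (Function.uncurry fun s ω => X s ω ^ 2) :=
    ((measurable_uncurry_of_continuous_of_measurable hcont hmeas).pow_const 2).stronglyMeasurable
  exact (h.integral_prod_left'.sub h.integral_prod_left').measurable

namespace IsStdBM

variable {Ω : Type*} [MeasurableSpace Ω] {P : Measure Ω} {B : ℝ → Ω → ℝ} {a s : ℝ}

lemma hasLaw (hB : IsStdBM P B) (hs : 0 ≤ s) : HasLaw (B s) (gaussianReal 0 s.toNNReal) P where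
  aemeasurable := (hB.measurable s).aemeasurable
  map_eq := by simpa [hB.start] using hB.gauss 0 s le_rfl hs

lemma isProbabilityMeasure (hB : IsStdBM P B) : IsProbabilityMeasure P :=
  (hB.hasLaw le_rfl).isProbabilityMeasure

lemma isPreBrownianReal (hB : IsStdBM P B) : IsPreBrownianReal (fun t : ℝ≥0 => B t) P :=
  HasIndepIncrements.isPreBrownianReal_of_hasLaw
    (fun t => by simpa using hB.hasLaw t.coe_nonneg)
    fun n t ht => hB.indep n (fun i => t i) (fun i => (t i).coe_nonneg) fun _ _ h => ht h

lemma integral_eq_zero (hB : IsStdBM P B) (hs : 0 ≤ s) : ∫ ω, B s ω ∂P = 0 := by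
  simpa using (hB.hasLaw hs).integral_eq

lemma memLp_two (hB : IsStdBM P B) (hs : 0 ≤ s) : MemLp (B s) 2 P :=
  (hB.hasLaw hs).hasGaussianLaw.memLp_two

lemma covariance_eq (hB : IsStdBM P B) (hs : 0 ≤ s) (ha : 0 ≤ a) : cov[B s, B a; P] = min s a := by
  lift s to ℝ≥0 using hs
  lift a to ℝ≥0 using ha
  exact_mod_cast hB.isPreBrownianReal.covariance_eval s a

lemma variance_eq (hB : IsStdBM P B) (hs : 0 ≤ s) : Var[B s; P] = s := by
  rw [← covariance_self (hB.measurable s).aemeasurable, hB.covariance_eq hs hs, min_self]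

lemma integral_sq (hB : IsStdBM P B) (hs : 0 ≤ s) : ∫ ω, B s ω ^ 2 ∂P = s := by
  rw [← variance_of_integral_eq_zero (hB.measurable s).aemeasurable (hB.integral_eq_zero hs),
    hB.variance_eq hs]

lemma hasGaussianLaw_bridge_prodMk (hB : IsStdBM P B) (hs : 0 ≤ s) (ha : 0 ≤ a) :
    HasGaussianLaw (fun ω => (bridge B a s ω, B a ω)) P := by
  lift s to ℝ≥0 using hs
  lift a to ℝ≥0 using ha
  exact (hB.isPreBrownianReal.isGaussianProcess.hasGaussianLaw_prodMk (s := s) (t := a)).map_fun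
    ((.fst ℝ ℝ ℝ - (s / a : ℝ) • .snd ℝ ℝ ℝ : ℝ × ℝ →L[ℝ] ℝ).prod (.snd ℝ ℝ ℝ))

lemma memLp_two_bridge (hB : IsStdBM P B) (hs : 0 ≤ s) (ha : 0 ≤ a) : MemLp (bridge B a s) 2 P :=
  (hB.hasGaussianLaw_bridge_prodMk hs ha).fst.memLp_two

lemma integral_bridge_eq_zero (hB : IsStdBM P B) (hs : 0 ≤ s) (ha : 0 ≤ a) :
    ∫ ω, bridge B a s ω ∂P = 0 := by
  have := hB.isProbabilityMeasure
  calc ∫ ω, bridge B a s ω ∂P = ∫ ω, B s ω ∂P - ∫ ω, s / a * B a ω ∂P :=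
        integral_sub ((hB.memLp_two hs).integrable one_le_two)
          (((hB.memLp_two ha).integrable one_le_two).const_mul _)
    _ = 0 := by simp [integral_const_mul, hB.integral_eq_zero, hs, ha]

lemma indepFun_bridge (hB : IsStdBM P B) (hs : 0 ≤ s) (ha : 0 < a) (hsa : s ≤ a) :
    IndepFun (bridge B a s) (B a) P := by
  have := hB.isProbabilityMeasure
  refine (hB.hasGaussianLaw_bridge_prodMk hs ha.le).indepFun_of_covariance_eq_zero ?_
  calc cov[bridge B a s, B a; P] = cov[B s, B a; P] - s / a * cov[B a, B a; P] := by
        rw [← covariance_const_mul_left]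
        exact covariance_fun_sub_left (hB.memLp_two hs) ((hB.memLp_two ha.le).const_mul _)
          (hB.memLp_two ha.le)
    _ = 0 := by
        rw [hB.covariance_eq hs ha.le, hB.covariance_eq ha.le ha.le, min_eq_left hsa, min_self,
          div_mul_cancel₀ s ha.ne', sub_self]

lemma integral_bridge_sq (hB : IsStdBM P B) (hs : 0 ≤ s) (ha : 0 < a) (hsa : s ≤ a) :
    ∫ ω, bridge B a s ω ^ 2 ∂P = s * (a - s) / a := by
  have := hB.isProbabilityMeasure
  have hmem := hB.memLp_two_bridge hs ha.le
  calc ∫ ω, bridge B a s ω ^ 2 ∂P = Var[bridge B a s; P] :=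
        (variance_of_integral_eq_zero hmem.aemeasurable
          (hB.integral_bridge_eq_zero hs ha.le)).symm
    _ = Var[B s; P] - 2 * (s / a * cov[B s, B a; P]) + (s / a) ^ 2 * Var[B a; P] := by
        rw [← covariance_const_mul_right, ← variance_const_mul]
        exact variance_fun_sub (hB.memLp_two hs) ((hB.memLp_two ha.le).const_mul _)
    _ = s * (a - s) / a := by
        rw [hB.covariance_eq hs ha.le, min_eq_left hsa, hB.variance_eq hs, hB.variance_eq ha.le]
        field_simp
        ring

lemma setIntegral_sq (hB : IsStdBM P B) (hs : 0 ≤ s) (ha : 0 < a) (hsa : s ≤ a) {S : Set ℝ}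
    (hS : MeasurableSet S) :
    ∫ ω in B a ⁻¹' S, B s ω ^ 2 ∂P =
      P.real (B a ⁻¹' S) * (s * (a - s) / a) + (s / a) ^ 2 * ∫ ω in B a ⁻¹' S, B a ω ^ 2 ∂P := by
  have := hB.isProbabilityMeasure
  rw [← hB.integral_bridge_sq hs ha hsa, ← setIntegral_sq_add_const_mul_of_indepFun
    (hB.indepFun_bridge hs ha hsa) (hB.memLp_two_bridge hs ha.le) (hB.memLp_two ha.le)
    (hB.measurable a) (hB.integral_bridge_eq_zero hs ha.le) hS]
  simp only [bridge, sub_add_cancel]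

lemma measurable_uncurry (hB : IsStdBM P B) : Measurable (Function.uncurry B) :=
  measurable_uncurry_of_continuous_of_measurable hB.cont hB.measurable

lemma integrable_uncurry_sq (hB : IsStdBM P B) (ha : 0 ≤ a) :
    Integrable (Function.uncurry fun s ω => B s ω ^ 2) ((volume.restrict (uIoc 0 a)).prod P) := by
  have := hB.isProbabilityMeasure
  rw [uIoc_of_le ha]
  refine integrable_uncurry_of_forall_integral_norm_le (C := a)
    (hB.measurable_uncurry.pow_const 2).aestronglyMeasurable
    (ae_restrict_of_forall_mem measurableSet_Ioc fun s hs => (hB.memLp_two hs.1.le).integrable_sq)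
    (ae_restrict_of_forall_mem measurableSet_Ioc fun s hs => ?_)
  simpa only [norm_of_nonneg (sq_nonneg _), hB.integral_sq hs.1.le] using hs.2

lemma integrable_sqIntegral (hB : IsStdBM P B) (ha : 0 ≤ a) : Integrable (sqIntegral B a) P := by
  have := hB.isProbabilityMeasure
  refine (hB.integrable_uncurry_sq ha).integral_prod_right.congr (.of_forall fun ω => ?_)
  rw [sqIntegral, intervalIntegral.integral_of_le ha, uIoc_of_le ha]
  rfl

lemma setIntegral_sqIntegral (hB : IsStdBM P B) (ha : 0 < a) {S : Set ℝ} (hS : MeasurableSet S) :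
    ∫ ω in B a ⁻¹' S, sqIntegral B a ω ∂P =
      a ^ 2 / 6 * P.real (B a ⁻¹' S) + a / 3 * ∫ ω in B a ⁻¹' S, B a ω ^ 2 ∂P := by
  have := hB.isProbabilityMeasure
  set p := P.real (B a ⁻¹' S)
  set I := ∫ ω in B a ⁻¹' S, B a ω ^ 2 ∂P
  have hint : Integrable (Function.uncurry fun s ω => B s ω ^ 2)
      ((volume.restrict (uIoc 0 a)).prod (P.restrict (B a ⁻¹' S))) :=
    (hB.integrable_uncurry_sq ha.le).mono_measure
      (Measure.prod_mono le_rfl Measure.restrict_le_self)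
  calc ∫ ω in B a ⁻¹' S, sqIntegral B a ω ∂P
      = ∫ s in (0 : ℝ)..a, ∫ ω in B a ⁻¹' S, B s ω ^ 2 ∂P :=
        (intervalIntegral_integral_swap hint).symm
    _ = ∫ s in (0 : ℝ)..a, (p * s + (I / a ^ 2 - p / a) * s ^ 2) := by
        refine intervalIntegral.integral_congr fun s hs => ?_
        rw [uIcc_of_le ha.le] at hs
        simp only [hB.setIntegral_sq hs.1 ha hs.2 hS]
        field_simp
        ring
    _ = a ^ 2 / 6 * p + a / 3 * I := by
        rw [intervalIntegral.integral_add (Continuous.intervalIntegrable (by fun_prop) _ _)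
          (Continuous.intervalIntegrable (by fun_prop) _ _), intervalIntegral.integral_const_mul,
          intervalIntegral.integral_const_mul, integral_id, integral_pow]
        field_simp
        ring

lemma measureReal_sq_le (hB : IsStdBM P B) (ha : 0 < a) (δ : ℝ) :
    P.real (B a ⁻¹' {x | x ^ 2 ≤ δ * a}) = (gaussianReal 0 1).real {x | x ^ 2 ≤ δ} := by
  have hlaw : HasLaw (fun ω => B a ω / √a) (gaussianReal 0 1) P := by
    convert gaussianReal_div_const (hB.hasLaw ha.le) (√a) using 2
    · simp
    · ext
      simp [sq_sqrt ha.le, ha.le, ha.ne']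
  rw [← hlaw.map_eq, map_measureReal_apply ((hB.measurable a).div_const _)
    (measurableSet_le (by fun_prop) (by fun_prop))]
  simp only [preimage_ofPred_eq, div_pow, sq_sqrt ha.le, div_le_iff₀ ha]

lemma mul_gaussianReal_sq_le_le_mul_measureReal_sqIntegral_lt (hB : IsStdBM P B) (ha : 0 < a)
    {κ : ℝ} (hκ : 0 ≤ κ) (δ : ℝ) :
    (κ - 1 / 6 - δ / 3) * (gaussianReal 0 1).real {x | x ^ 2 ≤ δ} ≤
      κ * P.real {ω | sqIntegral B a ω < κ * a ^ 2} := by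
  have := hB.isProbabilityMeasure
  set q := (gaussianReal 0 1).real {x | x ^ 2 ≤ δ}
  set E := B a ⁻¹' {x | x ^ 2 ≤ δ * a}
  have hS : MeasurableSet {x : ℝ | x ^ 2 ≤ δ * a} :=
    measurableSet_le (by fun_prop) measurable_const
  have hq : P.real E = q := hB.measureReal_sq_le ha δ
  have hend : ∫ ω in E, B a ω ^ 2 ∂P ≤ δ * a * q := by
    calc ∫ ω in E, B a ω ^ 2 ∂P ≤ ∫ _ in E, δ * a ∂P :=
          setIntegral_mono_on (hB.memLp_two ha.le).integrable_sq.integrableOn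
            (integrableOn_const (measure_ne_top _ _)) (hB.measurable a hS) fun _ hω => hω
      _ = δ * a * q := by rw [setIntegral_const, hq, smul_eq_mul, mul_comm]
  have hmean : ∫ ω in E, sqIntegral B a ω ∂P ≤ a ^ 2 / 6 * q + a / 3 * (δ * a * q) := by
    rw [hB.setIntegral_sqIntegral ha hS, hq]
    gcongr
  have hmarkov := mul_measureReal_le_mul_measureReal_lt_add_setIntegral (E := E)
    (f := sqIntegral B a) (mul_nonneg hκ (sq_nonneg a))
    (.of_forall fun ω => intervalIntegral.integral_nonneg ha.le fun s _ => sq_nonneg (B s ω))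
    (hB.integrable_sqIntegral ha.le).integrableOn
  rw [hq] at hmarkov
  refine le_of_mul_le_mul_left ?_ (pow_pos ha 2)
  linarith

lemma exists_pos_forall_le_measureReal_sqIntegral_lt.{u} {κ : ℝ} (hκ : 1 / 6 < κ) :
    ∃ p > 0, ∀ {Ω : Type u} [MeasurableSpace Ω] {P : Measure Ω} {B : ℝ → Ω → ℝ}, IsStdBM P B →
      ∀ {a : ℝ}, 0 < a → p ≤ P.real {ω | sqIntegral B a ω < κ * a ^ 2} := by
  set δ := 3 / 2 * (κ - 1 / 6) with hδ
  have hκ₀ : 0 < κ := by linarith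
  have hgap : 0 < κ - 1 / 6 - δ / 3 := by linarith
  have hgauss : 0 < (gaussianReal 0 1).real {x | x ^ 2 ≤ δ} :=
    gaussianReal_sq_le_pos (by linarith) 0 one_ne_zero
  refine ⟨_, div_pos (mul_pos hgap hgauss) hκ₀, fun hB a ha => ?_⟩
  rw [div_le_iff₀' hκ₀]
  exact hB.mul_gaussianReal_sq_le_le_mul_measureReal_sqIntegral_lt ha hκ₀.le δ

lemma integrable_exp_mul_sq (hB : IsStdBM P B) {t : ℝ} (hs : 0 ≤ s) (ht : 2 * s * t < 1) :
    Integrable (fun ω => exp (t * B s ω ^ 2)) P := by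
  have hint := integrable_exp_mul_sq_gaussianReal (v := s.toNNReal) (t := t)
    (by rwa [coe_toNNReal s hs])
  rw [← (hB.hasLaw hs).map_eq] at hint
  exact hint.comp_measurable (hB.measurable s)

lemma mgf_sq (hB : IsStdBM P B) {t : ℝ} (hs : 0 ≤ s) (ht : 2 * s * t < 1) :
    mgf (fun ω => B s ω ^ 2) P t = (√(1 - 2 * s * t))⁻¹ := by
  have h := mgf_sq_gaussianReal (v := s.toNNReal) (t := t) (by rwa [coe_toNNReal s hs])
  rw [coe_toNNReal s hs] at h
  rw [← h, ← (hB.hasLaw hs).map_eq, mgf_map (hB.measurable s).aemeasurable (by fun_prop)]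
  rfl

lemma integrable_exp_mul_and_mgf_sqIntegral_le (hB : IsStdBM P B) {t : ℝ} (ha : 0 ≤ a)
    (ht₀ : 0 ≤ t) (ht : 2 * a ^ 2 * t < 1) :
    Integrable (fun ω => exp (t * sqIntegral B a ω)) P ∧
      mgf (sqIntegral B a) P t ≤ (√(1 - 2 * a ^ 2 * t))⁻¹ := by
  have := hB.isProbabilityMeasure
  have : IsProbabilityMeasure (volume.restrict (Ioc (0 : ℝ) 1)) := ⟨by simp⟩
  have hscale : sqIntegral B a = fun ω => ∫ u in Ioc (0 : ℝ) 1, a * B (a * u) ω ^ 2 := by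
    ext ω
    have h := intervalIntegral.smul_integral_comp_mul_left (a := 0) (b := 1) (B · ω ^ 2) a
    rw [mul_zero, mul_one] at h
    rw [sqIntegral, ← h, intervalIntegral.integral_of_le zero_le_one, integral_const_mul,
      smul_eq_mul]
  have htime {u : ℝ} (hu : u ∈ Ioc (0 : ℝ) 1) :
      0 ≤ a * u ∧ 2 * (a * u) * (t * a) ≤ 2 * a ^ 2 * t := by
    refine ⟨mul_nonneg ha hu.1.le, ?_⟩
    calc 2 * (a * u) * (t * a) = 2 * a ^ 2 * t * u := by ring
      _ ≤ 2 * a ^ 2 * t := mul_le_of_le_one_right (by positivity) hu.2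
  rw [hscale]
  refine integrable_exp_mul_and_mgf_le_of_forall_mgf_le ?_ (.of_forall fun ω => ?_)
    (ae_restrict_of_forall_mem measurableSet_Ioc fun u hu => ?_)
    (ae_restrict_of_forall_mem measurableSet_Ioc fun u hu => ?_)
  · exact ((hB.measurable_uncurry.comp (f := fun p : ℝ × Ω => (a * p.1, p.2))
      (by fun_prop)).pow_const 2).const_mul a
  · have := hB.cont ω
    exact Continuous.integrableOn_Ioc (by fun_prop)
  · simpa only [mul_assoc] using
      hB.integrable_exp_mul_sq (htime hu).1 ((htime hu).2.trans_lt ht)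
  · rw [mgf_const_mul, mul_comm a t, hB.mgf_sq (htime hu).1 ((htime hu).2.trans_lt ht)]
    have := sub_pos.2 ht
    gcongr ?_⁻¹
    exact sqrt_le_sqrt (sub_le_sub_left (htime hu).2 1)

end IsStdBM

namespace IsStdBMVec

variable {d : ℕ} {Ω : Type*} [MeasurableSpace Ω] {P : Measure Ω}
  {γ : ℝ → Ω → EuclideanSpace ℝ (Fin d)} {a : ℝ}

lemma integral_norm_sq (hγ : IsStdBMVec d P γ) (a : ℝ) (ω : Ω) :
    ∫ s in (0 : ℝ)..a, ‖γ s ω‖ ^ 2 = ∑ i, sqIntegral (fun s ω => γ s ω i) a ω := by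
  simp only [EuclideanSpace.real_norm_sq_eq, sqIntegral]
  exact intervalIntegral.integral_finsetSum fun i _ =>
    (((hγ.coord i).cont ω).pow 2).intervalIntegrable 0 a

lemma measurable_sqIntegral_coord (hγ : IsStdBMVec d P γ) (a : ℝ) (i : Fin d) :
    Measurable (sqIntegral (fun s ω => γ s ω i) a) :=
  measurable_sqIntegral (hγ.coord i).measurable (hγ.coord i).cont a

lemma iIndepFun_sqIntegral_coord (hγ : IsStdBMVec d P γ) (a : ℝ) :
    iIndepFun (fun i => sqIntegral (fun s ω => γ s ω i) a) P := by
  have hfactor (i : Fin d) : ∃ F : (ℝ → ℝ) → ℝ, Measurable F ∧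
      sqIntegral (fun s ω => γ s ω i) a = F ∘ fun ω s => γ s ω i := by
    let path : Ω → ℝ → ℝ := fun ω s => γ s ω i
    refine (@measurable_sqIntegral Ω (.comap path .pi) _ (fun s => ?_)
      (hγ.coord i).cont a).exists_eq_measurable_comp
    exact (measurable_pi_apply s).comp (comap_measurable path)
  choose F hF hFeq using hfactor
  simpa only [hFeq] using hγ.indepCoord.comp F hF

lemma measureReal_le_integral_norm_sq_le_exp (hγ : IsStdBMVec d P γ) (ha : 0 < a) (b : ℝ) :
    P.real {ω | b ≤ ∫ s in (0 : ℝ)..a, ‖γ s ω‖ ^ 2} ≤ exp (d / 2 - 1 / 4 * (b / a ^ 2)) := by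
  set t := 1 / (4 * a ^ 2) with ht
  have hta : 2 * a ^ 2 * t = 1 / 2 := by rw [ht]; field_simp; norm_num
  have hcoord (i : Fin d) := (hγ.coord i).integrable_exp_mul_and_mgf_sqIntegral_le (t := t)
    ha.le (by positivity) (by rw [hta]; norm_num)
  have hmgf (i : Fin d) : mgf (sqIntegral (fun s ω => γ s ω i) a) P t ≤ exp (1 / 2) := by
    refine (hcoord i).2.trans ?_
    rw [hta, exp_half, ← sqrt_inv]
    exact sqrt_le_sqrt (by linarith [add_one_le_exp (1 : ℝ)])
  calc P.real {ω | b ≤ ∫ s in (0 : ℝ)..a, ‖γ s ω‖ ^ 2}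
      ≤ exp (-t * b) * exp (1 / 2) ^ d := by
        simpa only [hγ.integral_norm_sq, Fintype.card_fin] using
          measureReal_le_sum_le_exp_mul_pow (hγ.iIndepFun_sqIntegral_coord a)
            (hγ.measurable_sqIntegral_coord a) (by positivity) (fun i => (hcoord i).1) hmgf b
    _ = exp (d / 2 - 1 / 4 * (b / a ^ 2)) := by
        rw [← exp_nat_mul, ← exp_add, ht]
        congr 1
        field_simp
        ring

lemma exists_pos_forall_measureReal_le_one_sub.{u} {κ : ℝ} (hκ : (d : ℝ) / 6 < κ) :
    ∃ p > 0, ∀ {Ω : Type u} [MeasurableSpace Ω] {P : Measure Ω}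
      {γ : ℝ → Ω → EuclideanSpace ℝ (Fin d)}, IsStdBMVec d P γ → ∀ {a : ℝ}, 0 < a →
      P.real {ω | κ * a ^ 2 ≤ ∫ s in (0 : ℝ)..a, ‖γ s ω‖ ^ 2} ≤ 1 - p := by
  obtain ⟨κ₁, hκ₁, hdκ₁⟩ : ∃ κ₁ : ℝ, 1 / 6 < κ₁ ∧ d * κ₁ < κ := by
    refine ⟨1 / 6 + (κ - d / 6) / (d + 1), ?_, ?_⟩
    · have := sub_pos.2 hκ
      linarith [div_pos this (Nat.cast_add_one_pos d)]
    · have hd : d * ((κ - d / 6) / (d + 1)) < κ - d / 6 := by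
        rw [mul_div_left_comm]
        exact mul_lt_of_lt_one_right (sub_pos.2 hκ) ((div_lt_one (by positivity)).2 (lt_add_one _))
      linarith
  obtain ⟨p, hp, hcoord⟩ := IsStdBM.exists_pos_forall_le_measureReal_sqIntegral_lt.{u} hκ₁
  refine ⟨p ^ d, pow_pos hp d, fun hγ a ha => ?_⟩
  simpa only [hγ.integral_norm_sq, Fintype.card_fin] using
    measureReal_le_sum_le_one_sub_pow (hγ.iIndepFun_sqIntegral_coord a)
      (hγ.measurable_sqIntegral_coord a) hp.le (fun i => hcoord (hγ.coord i) ha) (v := κ * a ^ 2)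
      (by rw [Fintype.card_fin, ← mul_assoc]; gcongr)

end IsStdBMVec

theorem sqBessel4_time_integral_tail_general.{u} {d : ℕ} {κ : ℝ} (hκ : (d : ℝ) / 6 < κ) :
    ∃ c : ℝ, 0 < c ∧ ∀ {Ω : Type u} [MeasurableSpace Ω] (P : Measure Ω)
      (γ : ℝ → Ω → EuclideanSpace ℝ (Fin d)), IsStdBMVec d P γ →
      ∀ a : ℝ, 0 < a → ∀ b : ℝ, κ * a ^ 2 ≤ b →
        P {ω | b ≤ ∫ s in (0 : ℝ)..a, ‖γ s ω‖ ^ 2} ≤ ENNReal.ofReal (exp (-c * b / a ^ 2)) := by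
  obtain ⟨p, hp, hgap⟩ := IsStdBMVec.exists_pos_forall_measureReal_le_one_sub.{u} hκ
  refine ⟨1 / 4 * p / (d / 2 + p), by positivity, fun P γ hγ a ha b hb => ?_⟩
  have := hγ.indepCoord.isProbabilityMeasure
  have hgap_b : P.real {ω | b ≤ ∫ s in (0 : ℝ)..a, ‖γ s ω‖ ^ 2} ≤ 1 - p :=
    (measureReal_mono fun ω hω => hb.trans hω).trans (hgap hγ ha)
  rw [← ofReal_measureReal, mul_div_assoc]
  exact ENNReal.ofReal_le_ofReal <| le_exp_of_le_exp_of_le_one_sub hp (by positivity)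
    (hγ.measureReal_le_integral_norm_sq_le_exp ha b) hgap_b

/-- there is `c₅ > 0` such that for all `a > 0` and `b ≥ a²`,
`P{A(a) ≥ b} ≤ exp(-c₅ b / a²)`, where `A(t) := ∫₀^t U(s) ds` for the squared
four-dimensional Bessel process `U` started at `0`. -/
theorem sqBessel4_time_integral_tail
    {Ω : Type*} [MeasurableSpace Ω] (P : Measure Ω) [IsProbabilityMeasure P]
    (γ : ℝ → Ω → EuclideanSpace ℝ (Fin 4)) (hγ : IsStdBMVec 4 P γ) :
    ∃ c₅ : ℝ, 0 < c₅ ∧ ∀ a : ℝ, 0 < a → ∀ b : ℝ, a ^ 2 ≤ b →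
      P {ω | b ≤ ∫ s in (0:ℝ)..a, sqBessel4 γ s ω}
        ≤ ENNReal.ofReal (Real.exp (-c₅ * b / a ^ 2)) := by
  obtain ⟨c, hc, htail⟩ := sqBessel4_time_integral_tail_general (d := 4) (κ := 1) (by norm_num)
  exact ⟨c, hc, fun a ha b hb => htail P γ hγ a ha b (by rwa [one_mul])⟩
end
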